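/- arXiv:1906.06741 — 2 statements merged into one kernel-verified Lean document; each statement's English description precedes it below -/
import Mathlib

section
/- Theorem 3.1: Fix t₁ > 0. The second order linear continuous-time system x''(t) = A₀x(t) + A₁x'(t) + Bu(t) with measurements y(t) = Cx(t) is observable on [0, t₁] — i.e., for every infinitely differentiable input u : ℝ → ℝʳ, any two infinitely differentiable solutions x, x̃ of the differential equation with this same input for which Cx(t) = Cx̃(t) for all t ∈ [0, t₁] satisfy x(0) = x̃(0) and x'(0) = x̃'(0) — if and only if the observability matrix 𝒪(A₀,A₁,C) has rank 2n. -/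
/-- The pair `(S_k, P_k)` of matrix sequences: `S₀ = A₀`, `P₀ = A₁`,
`S_k = P_{k−1}A₀`, `P_k = S_{k−1} + P_{k−1}A₁` for `k ≥ 1`. -/
noncomputable def SPseq {n : ℕ} (A0 A1 : Matrix (Fin n) (Fin n) ℝ) :
    ℕ → Matrix (Fin n) (Fin n) ℝ × Matrix (Fin n) (Fin n) ℝ
  | 0 => (A0, A1)
  | k + 1 => ((SPseq A0 A1 k).2 * A0, (SPseq A0 A1 k).1 + (SPseq A0 A1 k).2 * A1)

/-- Left `p × n` block of the `i`-th block row of the observability matrix: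
`C`, `0`, `C·S₀`, `C·S₁`, …. -/
noncomputable def obsBlockL {n p : ℕ} (A0 A1 : Matrix (Fin n) (Fin n) ℝ)
    (C : Matrix (Fin p) (Fin n) ℝ) : ℕ → Matrix (Fin p) (Fin n) ℝ
  | 0 => C
  | 1 => 0
  | k + 2 => C * (SPseq A0 A1 k).1

/-- Right `p × n` block of the `i`-th block row of the observability matrix:
`0`, `C`, `C·P₀`, `C·P₁`, …. -/
noncomputable def obsBlockR {n p : ℕ} (A0 A1 : Matrix (Fin n) (Fin n) ℝ)
    (C : Matrix (Fin p) (Fin n) ℝ) : ℕ → Matrix (Fin p) (Fin n) ℝ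
  | 0 => 0
  | 1 => C
  | k + 2 => C * (SPseq A0 A1 k).2

/-- The `(2np) × (2n)` observability matrix `𝒪(A₀, A₁, C)` whose `2n` block rows are
`[C, 0]`, `[0, C]`, `[C·S₀, C·P₀]`, …, `[C·S_{2n−3}, C·P_{2n−3}]`. -/
noncomputable def obsMat {n p : ℕ} (A0 A1 : Matrix (Fin n) (Fin n) ℝ)
    (C : Matrix (Fin p) (Fin n) ℝ) : Matrix (Fin (2 * n) × Fin p) (Fin n ⊕ Fin n) ℝ :=
  fun iq => Sum.elim (fun j => obsBlockL A0 A1 C (iq.1 : ℕ) iq.2 j)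
    (fun j => obsBlockR A0 A1 C (iq.1 : ℕ) iq.2 j)

/-- The companion matrix of the second order system with coefficients `A₀`, `A₁`, acting on the
state formed by position and velocity. -/
noncomputable def companionMat {n : ℕ} (A0 A1 : Matrix (Fin n) (Fin n) ℝ) :
    Matrix (Fin n ⊕ Fin n) (Fin n ⊕ Fin n) ℝ :=
  Matrix.fromBlocks 0 1 A0 A1

theorem companionMat_mulVec_sumElim {n : ℕ} (A0 A1 : Matrix (Fin n) (Fin n) ℝ)
    (v w : Fin n → ℝ) :
    (companionMat A0 A1).mulVec (Sum.elim v w) = Sum.elim w (A0.mulVec v + A1.mulVec w) := by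
  simp [companionMat, Matrix.fromBlocks_mulVec]

theorem obsBlockL_succ {n p : ℕ} (A0 A1 : Matrix (Fin n) (Fin n) ℝ)
    (C : Matrix (Fin p) (Fin n) ℝ) (k : ℕ) :
    obsBlockL A0 A1 C (k + 1) = obsBlockR A0 A1 C k * A0 := by
  match k with
  | 0 => simp [obsBlockL, obsBlockR]
  | 1 => simp [obsBlockL, obsBlockR, SPseq]
  | k + 2 => simp [obsBlockL, obsBlockR, SPseq, Matrix.mul_assoc]

theorem obsBlockR_succ {n p : ℕ} (A0 A1 : Matrix (Fin n) (Fin n) ℝ)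
    (C : Matrix (Fin p) (Fin n) ℝ) (k : ℕ) :
    obsBlockR A0 A1 C (k + 1) = obsBlockL A0 A1 C k + obsBlockR A0 A1 C k * A1 := by
  match k with
  | 0 => simp [obsBlockL, obsBlockR]
  | 1 => simp [obsBlockL, obsBlockR, SPseq]
  | k + 2 => simp [obsBlockL, obsBlockR, SPseq, Matrix.mul_assoc, Matrix.mul_add]

/-- The `k`-th block row of the observability matrix is `[C, 0]` times the `k`-th power of the
companion matrix. -/
theorem fromCols_obsBlock_eq {n p : ℕ} (A0 A1 : Matrix (Fin n) (Fin n) ℝ)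
    (C : Matrix (Fin p) (Fin n) ℝ) (k : ℕ) :
    Matrix.fromCols (obsBlockL A0 A1 C k) (obsBlockR A0 A1 C k) =
      Matrix.fromCols C (0 : Matrix (Fin p) (Fin n) ℝ) * companionMat A0 A1 ^ k := by
  induction k with
  | zero => simp [obsBlockL, obsBlockR]
  | succ k ih =>
    rw [pow_succ, ← Matrix.mul_assoc, ← ih, obsBlockL_succ, obsBlockR_succ, companionMat,
      Matrix.fromCols_mul_fromBlocks]
    simp

theorem obsMat_mulVec_apply {n p : ℕ} (A0 A1 : Matrix (Fin n) (Fin n) ℝ)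
    (C : Matrix (Fin p) (Fin n) ℝ) (z : Fin n ⊕ Fin n → ℝ) (k : Fin (2 * n)) (q : Fin p) :
    (obsMat A0 A1 C).mulVec z (k, q) =
      (Matrix.fromCols C (0 : Matrix (Fin p) (Fin n) ℝ)).mulVec
        ((companionMat A0 A1 ^ (k : ℕ)).mulVec z) q := by
  rw [Matrix.mulVec_mulVec, ← fromCols_obsBlock_eq]
  rfl

theorem obsMat_mulVec_eq_zero_iff {n p : ℕ} (A0 A1 : Matrix (Fin n) (Fin n) ℝ)
    (C : Matrix (Fin p) (Fin n) ℝ) (z : Fin n ⊕ Fin n → ℝ) :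
    (obsMat A0 A1 C).mulVec z = 0 ↔ ∀ k < 2 * n,
      (Matrix.fromCols C (0 : Matrix (Fin p) (Fin n) ℝ)).mulVec
        ((companionMat A0 A1 ^ k).mulVec z) = 0 := by
  constructor
  · intro h k hk
    ext q
    rw [← obsMat_mulVec_apply A0 A1 C z ⟨k, hk⟩ q, h]
    rfl
  · intro h
    ext ⟨k, q⟩
    rw [obsMat_mulVec_apply, h k k.2]
    rfl

/-- By Cayley–Hamilton, if `D Mⁱ z = 0` for all `i` below the size of `M`, then for all `i`. -/
theorem mulVec_pow_mulVec_eq_zero {ι κ : Type*} [Fintype ι] [DecidableEq ι] [Nonempty ι]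
    (M : Matrix ι ι ℝ) (D : Matrix κ ι ℝ) (z : ι → ℝ)
    (h : ∀ i < Fintype.card ι, D.mulVec ((M ^ i).mulVec z) = 0) (k : ℕ) :
    D.mulVec ((M ^ k).mulVec z) = 0 := by
  have hdeg : (Polynomial.X ^ k %ₘ M.charpoly).natDegree < Fintype.card ι := by
    have hne : M.charpoly ≠ 1 := by
      intro h1
      have := M.charpoly_natDegree_eq_dim
      rw [h1, Polynomial.natDegree_one] at this
      exact Fintype.card_ne_zero this.symm
    simpa [M.charpoly_natDegree_eq_dim] using
      Polynomial.natDegree_modByMonic_lt (Polynomial.X ^ k) M.charpoly_monic hne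
  rw [M.pow_eq_aeval_mod_charpoly k, Polynomial.aeval_eq_sum_range' hdeg, Matrix.sum_mulVec,
    Matrix.mulVec_sum]
  refine Finset.sum_eq_zero fun i hi => ?_
  rw [Matrix.smul_mulVec, Matrix.mulVec_smul, h i (Finset.mem_range.mp hi), smul_zero]

theorem rank_eq_card_iff_forall_mulVec_eq_zero {ι κ : Type*} [Fintype ι]
    (D : Matrix κ ι ℝ) :
    D.rank = Fintype.card ι ↔ ∀ z, D.mulVec z = 0 → z = 0 := by
  have hrn := D.mulVecLin.finrank_range_add_finrank_ker
  rw [Module.finrank_fintype_fun_eq_card] at hrn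
  have hker : (∀ z, D.mulVec z = 0 → z = 0) ↔ Module.finrank ℝ D.mulVecLin.ker = 0 := by
    rw [Submodule.finrank_eq_zero, LinearMap.ker_eq_bot']
    rfl
  rw [hker, Matrix.rank]
  omega

/-- If `z` solves the linear system given by `M` and `D z` vanishes on an open set,
then so does `D Mᵏ z` for every `k`. -/
theorem mulVec_pow_mulVec_eq_zero_of_hasDerivAt {ι κ : Type*} [Fintype ι] [DecidableEq ι]
    [Fintype κ] (M : Matrix ι ι ℝ) (D : Matrix κ ι ℝ) (z : ℝ → ι → ℝ)
    (hz : ∀ t, HasDerivAt z (M.mulVec (z t)) t) {s : Set ℝ} (hs : IsOpen s)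
    (h : ∀ t ∈ s, D.mulVec (z t) = 0) (k : ℕ) :
    ∀ t ∈ s, D.mulVec ((M ^ k).mulVec (z t)) = 0 := by
  induction k with
  | zero => simpa using h
  | succ k ih =>
    intro t ht
    have hd : HasDerivAt (fun τ => (D * M ^ k).mulVec (z τ))
        ((D * M ^ k).mulVec (M.mulVec (z t))) t :=
      (D * M ^ k).mulVecLin.toContinuousLinearMap.hasFDerivAt.comp_hasDerivAt t (hz t)
    have h0 : HasDerivAt (fun τ => (D * M ^ k).mulVec (z τ)) 0 t := by
      refine (hasDerivAt_const t (0 : κ → ℝ)).congr_of_eventuallyEq ?_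
      filter_upwards [hs.mem_nhds ht] with τ hτ
      rw [← Matrix.mulVec_mulVec]
      exact ih τ hτ
    rw [pow_succ, ← hd.unique h0]
    simp [Matrix.mulVec_mulVec, Matrix.mul_assoc]

/-- The linear system given by `M` has a smooth solution through any `z₀`; it satisfies every
linear constraint `D z = 0` with `D Mᵏ z₀ = 0` for all `k`. -/
theorem exists_solution_of_mulVec_pow_mulVec_eq_zero {ι κ : Type*} [Fintype ι] [DecidableEq ι]
    [Fintype κ] (M : Matrix ι ι ℝ) (D : Matrix κ ι ℝ) (z₀ : ι → ℝ)
    (h : ∀ k, D.mulVec ((M ^ k).mulVec z₀) = 0) :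
    ∃ z : ℝ → ι → ℝ, ContDiff ℝ (⊤ : ℕ∞) z ∧ z 0 = z₀ ∧
      (∀ t, HasDerivAt z (M.mulVec (z t)) t) ∧ ∀ t, D.mulVec (z t) = 0 := by
  set T : (ι → ℝ) →L[ℝ] (ι → ℝ) := M.mulVecLin.toContinuousLinearMap
  have hTpow : ∀ (k : ℕ) (v : ι → ℝ), (T ^ k) v = (M ^ k).mulVec v := by
    intro k
    induction k with
    | zero => simp
    | succ k ih =>
      intro v
      rw [pow_succ, mul_apply_eq_comp, ih, pow_succ, ← Matrix.mulVec_mulVec]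
      rfl
  have hderiv (t : ℝ) : HasDerivAt (fun τ : ℝ => NormedSpace.exp (τ • T) z₀)
      (M.mulVec (NormedSpace.exp (t • T) z₀)) t :=
    (ContinuousLinearMap.apply ℝ (ι → ℝ) z₀).hasFDerivAt.comp_hasDerivAt t
      (hasDerivAt_exp_smul_const' T t)
  refine ⟨fun t => NormedSpace.exp (t • T) z₀, ?_, by simp, hderiv, ?_⟩
  · have hexp : ContDiff ℝ (⊤ : ℕ∞)
        (NormedSpace.exp : ((ι → ℝ) →L[ℝ] (ι → ℝ)) → ((ι → ℝ) →L[ℝ] (ι → ℝ))) :=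
      contDiff_iff_contDiffAt.mpr fun x => (NormedSpace.exp_analytic (𝕂 := ℝ) x).contDiffAt
    exact (hexp.comp (contDiff_id.smul contDiff_const)).clm_apply contDiff_const
  · intro t
    have hsum := (NormedSpace.exp_series_hasSum_exp' (𝕂 := ℝ) (t • T)).mapL
      (D.mulVecLin.toContinuousLinearMap.comp (ContinuousLinearMap.apply ℝ (ι → ℝ) z₀))
    refine hsum.unique ?_
    convert hasSum_zero using 2 with k
    simp [smul_pow, hTpow, h]

theorem hasDerivAt_sumElim {ι κ : Type*} [Fintype ι] [Fintype κ] {f : ℝ → ι → ℝ} {g : ℝ → κ → ℝ}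
    {f' : ι → ℝ} {g' : κ → ℝ} {t : ℝ} (hf : HasDerivAt f f' t) (hg : HasDerivAt g g' t) :
    HasDerivAt (fun τ => Sum.elim (f τ) (g τ)) (Sum.elim f' g') t := by
  rw [hasDerivAt_pi] at hf hg ⊢
  rintro (i | i)
  · exact hf i
  · exact hg i

theorem stmt9 {n r p : ℕ} (hn : 2 ≤ n) (hr : 1 ≤ r) (hp : 1 ≤ p)
    (A0 A1 : Matrix (Fin n) (Fin n) ℝ) (B : Matrix (Fin n) (Fin r) ℝ)
    (C : Matrix (Fin p) (Fin n) ℝ) (t₁ : ℝ) (ht₁ : 0 < t₁) :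
    (∀ u : ℝ → Fin r → ℝ, ContDiff ℝ (⊤ : ℕ∞) u → ∀ x x' : ℝ → Fin n → ℝ,
      ContDiff ℝ (⊤ : ℕ∞) x → ContDiff ℝ (⊤ : ℕ∞) x' →
      (∀ t, iteratedDeriv 2 x t
        = A0.mulVec (x t) + A1.mulVec (deriv x t) + B.mulVec (u t)) →
      (∀ t, iteratedDeriv 2 x' t
        = A0.mulVec (x' t) + A1.mulVec (deriv x' t) + B.mulVec (u t)) →
      (∀ t ∈ Set.Icc (0 : ℝ) t₁, C.mulVec (x t) = C.mulVec (x' t)) →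
      x 0 = x' 0 ∧ deriv x 0 = deriv x' 0) ↔
    (obsMat A0 A1 C).rank = 2 * n := by
  have hcard : 2 * n = Fintype.card (Fin n ⊕ Fin n) := by simp [two_mul]
  have : Nonempty (Fin n ⊕ Fin n) := ⟨Sum.inl ⟨0, by omega⟩⟩
  have hrank := rank_eq_card_iff_forall_mulVec_eq_zero (obsMat A0 A1 C)
  rw [← hcard] at hrank
  rw [hrank]
  constructor
  · intro hobs z₀ hz₀
    rw [obsMat_mulVec_eq_zero_iff, hcard] at hz₀
    obtain ⟨z, hsmooth, hinit, hderiv, hout⟩ := exists_solution_of_mulVec_pow_mulVec_eq_zero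
      (companionMat A0 A1) _ z₀ (mulVec_pow_mulVec_eq_zero _ _ z₀ hz₀)
    have hsplit (t : ℝ) : z t = Sum.elim (fun i => z t (Sum.inl i)) (fun i => z t (Sum.inr i)) :=
      (Sum.elim_comp_inl_inr (z t)).symm
    have hd (t : ℝ) := hasDerivAt_pi.mp (hderiv t)
    have hx (t : ℝ) : HasDerivAt (fun t i => z t (Sum.inl i)) (fun i => z t (Sum.inr i)) t := by
      refine hasDerivAt_pi.mpr fun i => ?_
      have := hd t (Sum.inl i)
      rw [hsplit t, companionMat_mulVec_sumElim] at this
      exact this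
    have hdx : deriv (fun t i => z t (Sum.inl i)) = fun t i => z t (Sum.inr i) :=
      funext fun t => (hx t).deriv
    have hdv (t : ℝ) : HasDerivAt (fun t i => z t (Sum.inr i))
        (A0.mulVec (fun i => z t (Sum.inl i)) + A1.mulVec (fun i => z t (Sum.inr i))) t := by
      refine hasDerivAt_pi.mpr fun i => ?_
      have := hd t (Sum.inr i)
      rw [hsplit t, companionMat_mulVec_sumElim] at this
      exact this
    have key := hobs 0 contDiff_const (fun t i => z t (Sum.inl i)) 0
      (contDiff_pi.mpr fun i => contDiff_pi.mp hsmooth (Sum.inl i)) contDiff_const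
      (fun t => by
        rw [iteratedDeriv_succ, iteratedDeriv_one, hdx, (hdv t).deriv]
        simp)
      (fun t => by
        rw [iteratedDeriv_succ, iteratedDeriv_one]
        simp)
      (fun t _ => by
        have := hout t
        rw [hsplit t, Matrix.fromCols_mulVec_sumElim] at this
        simpa using this)
    rw [hdx] at key
    rw [← hinit, hsplit 0]
    ext (i | i)
    · exact congrFun key.1 i
    · simpa using congrFun key.2 i
  · intro hinj u _ x x' hx hx' hode hode' hout
    have hxd := hx.differentiable (by simp)
    have hxd' := hx'.differentiable (by simp)
    have hdd := (contDiff_infty_iff_deriv.mp hx).2.differentiable (by simp)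
    have hdd' := (contDiff_infty_iff_deriv.mp hx').2.differentiable (by simp)
    set z : ℝ → Fin n ⊕ Fin n → ℝ := fun t => Sum.elim (x t - x' t) (deriv x t - deriv x' t)
    have hz (t : ℝ) : HasDerivAt z ((companionMat A0 A1).mulVec (z t)) t := by
      rw [companionMat_mulVec_sumElim]
      refine hasDerivAt_sumElim ((hxd t).hasDerivAt.sub (hxd' t).hasDerivAt) ?_
      have h1 := hode t
      have h2 := hode' t
      rw [iteratedDeriv_succ, iteratedDeriv_one] at h1 h2
      have heq : A0.mulVec (x t - x' t) + A1.mulVec (deriv x t - deriv x' t) =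
          deriv (deriv x) t - deriv (deriv x') t := by
        rw [h1, h2, Matrix.mulVec_sub, Matrix.mulVec_sub]
        abel
      rw [heq]
      exact (hdd t).hasDerivAt.sub (hdd' t).hasDerivAt
    have hzero : ∀ t ∈ Set.Ioo 0 t₁, z t = 0 := by
      intro t ht
      refine hinj _ ((obsMat_mulVec_eq_zero_iff _ _ _ _).mpr fun k _ => ?_)
      refine mulVec_pow_mulVec_eq_zero_of_hasDerivAt _ _ z hz isOpen_Ioo (fun τ hτ => ?_) k t ht
      rw [Matrix.fromCols_mulVec_sumElim]
      simp [Matrix.mulVec_sub, hout τ (Set.Ioo_subset_Icc_self hτ)]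
    have hcont : Continuous z := continuous_iff_continuousAt.mpr fun t => (hz t).continuousAt
    have hz0 : z 0 = 0 := by
      have hsub : closure (Set.Ioo 0 t₁) ⊆ {t | z t = 0} :=
        closure_minimal hzero (isClosed_eq hcont continuous_const)
      rw [closure_Ioo ht₁.ne] at hsub
      exact hsub ⟨le_rfl, ht₁.le⟩
    constructor
    · ext i
      simpa [z, sub_eq_zero] using congrFun hz0 (Sum.inl i)
    · ext i
      simpa [z, sub_eq_zero] using congrFun hz0 (Sum.inr i)
end

section
/- For a scalar-input system (r = 1, B = b a column vector), suppose the n×n controllability matrix 𝒞(A₀,A₁,b) = [M₀ M₁ ⋯ M_{n−1}] is invertible. Then for any infinitely differentiable x : ℝ → ℝⁿ and u : ℝ → ℝ satisfying x''(t) = A₀x(t) + A₁x'(t) + b·u(t) for all t, the column vector (u^{(n−1)}(t), …, u'(t), u(t))ᵀ equals 𝒞(A₀,A₁,b)⁻¹·(x^{(n+1)}(t) − S_{n−1}x(t) − P_{n−1}x'(t)) for every t; in particular the input u is uniquely determined by the solution x. -/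
/-- The matrix sequence `M₀ = b`, `M₁ = A₁b`, `M_k = A₀M_{k−2} + A₁M_{k−1}` for `k ≥ 2`. -/
noncomputable def Mseq {n r : ℕ} (A0 A1 : Matrix (Fin n) (Fin n) ℝ)
    (B : Matrix (Fin n) (Fin r) ℝ) : ℕ → Matrix (Fin n) (Fin r) ℝ
  | 0 => B
  | 1 => A1 * B
  | k + 2 => A0 * Mseq A0 A1 B k + A1 * Mseq A0 A1 B (k + 1)

/-- For a scalar-input system the controllability matrix `𝒞(A₀, A₁, b)` is the `n × n`
matrix whose columns are `M₀, M₁, …, M_{n−1}`. -/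
noncomputable def ctrbSq {n : ℕ} (A0 A1 : Matrix (Fin n) (Fin n) ℝ)
    (b : Matrix (Fin n) (Fin 1) ℝ) : Matrix (Fin n) (Fin n) ℝ :=
  fun i j => Mseq A0 A1 b (j : ℕ) i 0

open Matrix Finset

theorem HasDerivAt.const_mulVec {m n : Type*} [Fintype m] [Fintype n] (A : Matrix m n ℝ)
    {f : ℝ → n → ℝ} {f' : n → ℝ} {t : ℝ} (hf : HasDerivAt f f' t) :
    HasDerivAt (fun s => A *ᵥ f s) (A *ᵥ f') t :=
  (LinearMap.toContinuousLinearMap A.mulVecLin).hasFDerivAt.comp_hasDerivAt t hf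

theorem ContDiff.hasDerivAt_iteratedDeriv {E : Type*} [NormedAddCommGroup E] [NormedSpace ℝ E]
    {f : ℝ → E} (hf : ContDiff ℝ (⊤ : ℕ∞) f) (k : ℕ) (t : ℝ) :
    HasDerivAt (iteratedDeriv k f) (iteratedDeriv (k + 1) f t) t := by
  rw [iteratedDeriv_succ]
  exact (hf.differentiable_iteratedDeriv k (by exact_mod_cast WithTop.coe_lt_top k) t).hasDerivAt

/-- The sequence `P_k` also satisfies the recursion with the coefficients on the left. -/
theorem SPseq_snd_add_two {n : ℕ} (A0 A1 : Matrix (Fin n) (Fin n) ℝ) :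
    ∀ k, (SPseq A0 A1 (k + 2)).2 = A0 * (SPseq A0 A1 k).2 + A1 * (SPseq A0 A1 (k + 1)).2
  | 0 => by
    simp only [SPseq]
    noncomm_ring
  | 1 => by
    simp only [SPseq]
    noncomm_ring
  | k + 2 => by
    have hk := SPseq_snd_add_two A0 A1 k
    have hk1 := SPseq_snd_add_two A0 A1 (k + 1)
    calc (SPseq A0 A1 (k + 2 + 2)).2
        = (SPseq A0 A1 (k + 2)).2 * A0 + (SPseq A0 A1 (k + 1 + 2)).2 * A1 := rfl
      _ = (A0 * (SPseq A0 A1 k).2 + A1 * (SPseq A0 A1 (k + 1)).2) * A0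
          + (A0 * (SPseq A0 A1 (k + 1)).2 + A1 * (SPseq A0 A1 (k + 1 + 1)).2) * A1 := by
        rw [← hk, ← hk1]
      _ = A0 * ((SPseq A0 A1 k).2 * A0 + (SPseq A0 A1 (k + 1)).2 * A1)
          + A1 * ((SPseq A0 A1 (k + 1)).2 * A0 + (SPseq A0 A1 (k + 1 + 1)).2 * A1) := by
        noncomm_ring
      _ = A0 * (SPseq A0 A1 (k + 2)).2 + A1 * (SPseq A0 A1 (k + 2 + 1)).2 := rfl

theorem Mseq_succ {n r : ℕ} (A0 A1 : Matrix (Fin n) (Fin n) ℝ) (B : Matrix (Fin n) (Fin r) ℝ) :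
    ∀ k, Mseq A0 A1 B (k + 1) = (SPseq A0 A1 k).2 * B
  | 0 => rfl
  | 1 => by simp only [Mseq, SPseq, Matrix.add_mul, Matrix.mul_assoc]
  | k + 2 => by
    rw [Mseq, Mseq_succ A0 A1 B k, Mseq_succ A0 A1 B (k + 1), SPseq_snd_add_two,
      Matrix.add_mul, Matrix.mul_assoc, Matrix.mul_assoc]

/-- Derivatives of a solution of `x'' = A₀x + A₁x' + bu` in terms of `x`, `x'` and the
derivatives of the input. -/
theorem iteratedDeriv_add_two_solution {n : ℕ} (A0 A1 : Matrix (Fin n) (Fin n) ℝ)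
    (b : Matrix (Fin n) (Fin 1) ℝ) (x : ℝ → Fin n → ℝ) (u : ℝ → ℝ)
    (hx : ContDiff ℝ (⊤ : ℕ∞) x) (hu : ContDiff ℝ (⊤ : ℕ∞) u)
    (heq : ∀ t, iteratedDeriv 2 x t = A0 *ᵥ x t + A1 *ᵥ deriv x t + b *ᵥ fun _ => u t)
    (k : ℕ) (t : ℝ) :
    iteratedDeriv (k + 2) x t = (SPseq A0 A1 k).1 *ᵥ x t + (SPseq A0 A1 k).2 *ᵥ deriv x t
      + ∑ j ∈ range (k + 1), Mseq A0 A1 b j *ᵥ fun _ => iteratedDeriv (k - j) u t := by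
  induction k generalizing t with
  | zero => simpa [SPseq, Mseq] using heq t
  | succ k ih =>
    have hx0 : HasDerivAt x (deriv x t) t := by
      simpa using hx.hasDerivAt_iteratedDeriv 0 t
    have hx1 : HasDerivAt (deriv x) (iteratedDeriv 2 x t) t := by
      simpa using hx.hasDerivAt_iteratedDeriv 1 t
    have hsum : HasDerivAt
        (fun s => ∑ j ∈ range (k + 1), Mseq A0 A1 b j *ᵥ fun _ => iteratedDeriv (k - j) u s)
        (∑ j ∈ range (k + 1), Mseq A0 A1 b j *ᵥ fun _ => iteratedDeriv (k - j + 1) u t) t :=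
      HasDerivAt.fun_sum fun j _ => HasDerivAt.const_mulVec _
        (hasDerivAt_pi.2 fun _ => hu.hasDerivAt_iteratedDeriv (k - j) t)
    have hderiv := ((hx0.const_mulVec (SPseq A0 A1 k).1).fun_add
      (hx1.const_mulVec (SPseq A0 A1 k).2)).fun_add hsum
    rw [← funext ih] at hderiv
    rw [(hx.hasDerivAt_iteratedDeriv (k + 2) t).unique hderiv, heq t, sum_range_succ _ (k + 1),
      Mseq_succ]
    have hshift : ∑ j ∈ range (k + 1), (Mseq A0 A1 b j *ᵥ fun _ => iteratedDeriv (k + 1 - j) u t)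
        = ∑ j ∈ range (k + 1), Mseq A0 A1 b j *ᵥ fun _ => iteratedDeriv (k - j + 1) u t := by
      refine sum_congr rfl fun j hj => ?_
      rw [Nat.succ_sub (Nat.lt_succ_iff.1 (mem_range.1 hj))]
    rw [hshift]
    simp only [SPseq, mulVec_add, add_mulVec, mulVec_mulVec, Nat.sub_self, iteratedDeriv_zero]
    abel

theorem input_eq_inv_ctrbSq_mulVec {n : ℕ} (hn : 1 ≤ n) (A0 A1 : Matrix (Fin n) (Fin n) ℝ)
    (b : Matrix (Fin n) (Fin 1) ℝ) (hC : IsUnit (ctrbSq A0 A1 b))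
    (x : ℝ → Fin n → ℝ) (u : ℝ → ℝ)
    (hx : ContDiff ℝ (⊤ : ℕ∞) x) (hu : ContDiff ℝ (⊤ : ℕ∞) u)
    (heq : ∀ t, iteratedDeriv 2 x t = A0 *ᵥ x t + A1 *ᵥ deriv x t + b *ᵥ fun _ => u t) (t : ℝ) :
    (fun j : Fin n => iteratedDeriv (n - 1 - (j : ℕ)) u t)
      = (ctrbSq A0 A1 b)⁻¹ *ᵥ (iteratedDeriv (n + 1) x t - (SPseq A0 A1 (n - 1)).1 *ᵥ x t
          - (SPseq A0 A1 (n - 1)).2 *ᵥ deriv x t) := by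
  have hsol := iteratedDeriv_add_two_solution A0 A1 b x u hx hu heq (n - 1) t
  rw [show n - 1 + 2 = n + 1 by omega, Nat.sub_add_cancel hn] at hsol
  have hctrb : ctrbSq A0 A1 b *ᵥ (fun j : Fin n => iteratedDeriv (n - 1 - (j : ℕ)) u t)
      = ∑ j ∈ range n, Mseq A0 A1 b j *ᵥ fun _ => iteratedDeriv (n - 1 - j) u t := by
    ext i
    rw [Finset.sum_apply, Finset.sum_range]
    simp [mulVec, dotProduct, ctrbSq]
  rw [hsol, add_assoc, add_sub_cancel_left, add_sub_cancel_left, ← hctrb, mulVec_mulVec,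
    nonsing_inv_mul _ ((isUnit_iff_isUnit_det _).1 hC), one_mulVec]

theorem stmt13 {n : ℕ} (hn : 1 ≤ n)
    (A0 A1 : Matrix (Fin n) (Fin n) ℝ) (b : Matrix (Fin n) (Fin 1) ℝ)
    (hC : IsUnit (ctrbSq A0 A1 b))
    (x : ℝ → Fin n → ℝ) (u : ℝ → ℝ)
    (hx : ContDiff ℝ (⊤ : ℕ∞) x) (hu : ContDiff ℝ (⊤ : ℕ∞) u)
    (heq : ∀ t, iteratedDeriv 2 x t
      = A0.mulVec (x t) + A1.mulVec (deriv x t) + b.mulVec (fun _ => u t)) :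
    (∀ t, (fun j : Fin n => iteratedDeriv (n - 1 - (j : ℕ)) u t)
        = (ctrbSq A0 A1 b)⁻¹.mulVec
            (iteratedDeriv (n + 1) x t - (SPseq A0 A1 (n - 1)).1.mulVec (x t)
              - (SPseq A0 A1 (n - 1)).2.mulVec (deriv x t)))
      ∧ ∀ u' : ℝ → ℝ, ContDiff ℝ (⊤ : ℕ∞) u' →
          (∀ t, iteratedDeriv 2 x t
            = A0.mulVec (x t) + A1.mulVec (deriv x t) + b.mulVec (fun _ => u' t)) →
          u' = u := by
  refine ⟨input_eq_inv_ctrbSq_mulVec hn A0 A1 b hC x u hx hu heq, fun u' hu' heq' => ?_⟩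
  ext t
  have h := congrFun ((input_eq_inv_ctrbSq_mulVec hn A0 A1 b hC x u' hx hu' heq' t).trans
    (input_eq_inv_ctrbSq_mulVec hn A0 A1 b hC x u hx hu heq t).symm) ⟨n - 1, by omega⟩
  simpa using h
end
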